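/- Let r, t ≥ 1 be integers and let A_{r,t} be the r×t all-one zero-one matrix. Then there is a constant C (depending on r and t) such that for every positive integer n, ex(n, A_{r,t}) ≤ C · n^{2 − 1/t}. -/

import Mathlib

/-- A zero-one matrix `M` contains a zero-one matrix `A` if there are strictly increasing
injections of rows and columns such that every 1-entry of `A` corresponds to a 1-entry of `M`. -/
def matContains {m n a b : ℕ} (M : Fin m → Fin n → Bool) (A : Fin a → Fin b → Bool) : Prop :=
  ∃ f : Fin a → Fin m, ∃ g : Fin b → Fin n, StrictMono f ∧ StrictMono g ∧
    ∀ i j, A i j = true → M (f i) (g j) = true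

/-- The weight of a zero-one matrix: its number of 1-entries. -/
def matWeight {m n : ℕ} (M : Fin m → Fin n → Bool) : ℕ :=
  (Finset.univ.filter fun p : Fin m × Fin n => M p.1 p.2 = true).card

/-- The extremal number `ex(n, A)`. -/
noncomputable def matEx {a b : ℕ} (n : ℕ) (A : Fin a → Fin b → Bool) : ℕ :=
  sSup {w : ℕ | ∃ M : Fin n → Fin n → Bool, ¬ matContains M A ∧ matWeight M = w}

/-!
The argument is Kővári–Sós–Turán double counting. Suppose `M` avoids an `r × t` pattern, and count
the pairs formed by a row and a set of `t` columns in which that row has only 1-entries. If `r` rows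
shared such a set of columns, they would exhibit a copy of the all-one pattern, hence of every
`r × t` pattern; so each set of columns is counted at most `r - 1` times. If the `i`-th row has
`dᵢ` 1-entries, this gives `∑ (dᵢ choose t) ≤ (r - 1) (n choose t)`. Since
`(d - t + 1) ^ t ≤ t! (d choose t)` for `d ≥ t - 1` (smaller `d` are covered by truncated
subtraction), convexity of `x ↦ x ^ t` turns it into a bound for `∑ dᵢ`.
-/

section KovariSosTuran

open Finset

section DoubleCounting

variable {m n r t : ℕ} {M : Fin m → Fin n → Bool} {A : Fin r → Fin t → Bool}

/-- The support of the `i`-th row of `M`: the columns in which that row has a 1-entry. -/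
def rowSupport (M : Fin m → Fin n → Bool) (i : Fin m) : Finset (Fin n) := {j | M i j = true}

theorem mem_rowSupport {i : Fin m} {j : Fin n} : j ∈ rowSupport M i ↔ M i j = true := by
  simp [rowSupport]

theorem matWeight_eq_sum_card_rowSupport (M : Fin m → Fin n → Bool) :
    matWeight M = ∑ i, #(rowSupport M i) := by
  simp only [matWeight, rowSupport, card_filter, Fintype.sum_prod_type]

theorem matContains_of_forall_subset_rowSupport {R : Finset (Fin m)} {T : Finset (Fin n)}
    (hR : #R = r) (hT : #T = t) (h : ∀ i ∈ R, T ⊆ rowSupport M i) (A : Fin r → Fin t → Bool) :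
    matContains M A :=
  ⟨R.orderEmbOfFin hR, T.orderEmbOfFin hT, OrderEmbedding.strictMono _,
    OrderEmbedding.strictMono _, fun i j _ =>
      mem_rowSupport.1 (h _ (R.orderEmbOfFin_mem hR i) (T.orderEmbOfFin_mem hT j))⟩

theorem card_filter_subset_rowSupport_lt (hM : ¬ matContains M A) {T : Finset (Fin n)}
    (hT : #T = t) : #{i | T ⊆ rowSupport M i} < r := by
  by_contra! hr
  obtain ⟨R, hR, hRcard⟩ := exists_subset_card_eq hr
  exact hM (matContains_of_forall_subset_rowSupport hRcard hT
    (fun i hi => (mem_filter.1 (hR hi)).2) A)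

theorem sum_choose_card_rowSupport_le (hM : ¬ matContains M A) :
    ∑ i, (#(rowSupport M i)).choose t ≤ (r - 1) * n.choose t := by
  have choose_eq_card (i : Fin m) : (#(rowSupport M i)).choose t =
      #((powersetCard t univ).filter (· ⊆ rowSupport M i)) := by
    rw [← card_powersetCard]
    congr 1
    ext T
    simp only [mem_filter, mem_powersetCard, subset_univ, true_and, and_comm]
  calc ∑ i, (#(rowSupport M i)).choose t
      = ∑ i, #((powersetCard t univ).filter (· ⊆ rowSupport M i)) :=
        sum_congr rfl fun i _ => choose_eq_card i
    _ = ∑ T ∈ powersetCard t univ, #{i | T ⊆ rowSupport M i} :=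
        sum_card_bipartiteAbove_eq_sum_card_bipartiteBelow fun i T => T ⊆ rowSupport M i
    _ ≤ #(powersetCard t (univ : Finset (Fin n))) • (r - 1) :=
        sum_le_card_nsmul _ _ _ fun _ hT => Nat.le_sub_one_of_lt
          (card_filter_subset_rowSupport_lt hM (mem_powersetCard.1 hT).2)
    _ = (r - 1) * n.choose t := by
        rw [card_powersetCard, card_univ, Fintype.card_fin, smul_eq_mul, mul_comm]

end DoubleCounting

section Convexity

variable {ι : Type*} {s : Finset ι} {d : ι → ℕ} {c n t : ℕ}

theorem sum_tsub_pow_le_of_sum_choose_le (h : ∑ i ∈ s, (d i).choose t ≤ c * n.choose t) :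
    ∑ i ∈ s, (d i + 1 - t) ^ t ≤ c * n ^ t :=
  calc ∑ i ∈ s, (d i + 1 - t) ^ t
      ≤ ∑ i ∈ s, (d i).descFactorial t :=
        sum_le_sum fun _ _ => Nat.pow_sub_le_descFactorial _ _
    _ = t.factorial * ∑ i ∈ s, (d i).choose t := by
        simp only [Nat.descFactorial_eq_factorial_mul_choose, mul_sum]
    _ ≤ t.factorial * (c * n.choose t) := by gcongr
    _ = c * n.descFactorial t := by rw [Nat.descFactorial_eq_factorial_mul_choose]; ring
    _ ≤ c * n ^ t := by gcongr; exact Nat.descFactorial_le_pow _ _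

theorem sum_le_card_rpow_mul_sum_rpow {f : ι → ℝ} {p : ℝ} (hp : 1 ≤ p) (hf : ∀ i ∈ s, 0 ≤ f i) :
    ∑ i ∈ s, f i ≤ (#s : ℝ) ^ (1 - 1 / p) * (∑ i ∈ s, f i ^ p) ^ (1 / p) := by
  have hp0 : 0 < p := by linarith
  have hsum : 0 ≤ ∑ i ∈ s, f i ^ p := sum_nonneg fun i hi => Real.rpow_nonneg (hf i hi) p
  refine (Real.rpow_le_rpow_iff (sum_nonneg hf) (by positivity) hp0).1 ?_
  calc (∑ i ∈ s, f i) ^ p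
      ≤ (#s : ℝ) ^ (p - 1) * ∑ i ∈ s, f i ^ p :=
        Real.rpow_sum_le_const_mul_sum_rpow_of_nonneg s hp hf
    _ = ((#s : ℝ) ^ (1 - 1 / p) * (∑ i ∈ s, f i ^ p) ^ (1 / p)) ^ p := by
        rw [Real.mul_rpow (by positivity) (by positivity), ← Real.rpow_mul (by positivity),
          ← Real.rpow_mul hsum, one_div_mul_cancel hp0.ne', Real.rpow_one, sub_mul,
          one_div_mul_cancel hp0.ne', one_mul]

theorem sum_le_of_sum_choose_le (ht : 1 ≤ t) (h : ∑ i ∈ s, (d i).choose t ≤ c * n.choose t) :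
    (∑ i ∈ s, d i : ℝ) ≤
      (c : ℝ) ^ (1 / (t : ℝ)) * (#s : ℝ) ^ (1 - 1 / (t : ℝ)) * n + (t - 1) * #s := by
  have excess_pow_le : ∑ i ∈ s, ((d i + 1 - t : ℕ) : ℝ) ^ (t : ℝ) ≤ c * (n : ℝ) ^ (t : ℝ) := by
    simp only [Real.rpow_natCast]
    exact_mod_cast sum_tsub_pow_le_of_sum_choose_le h
  have excess_le : ∑ i ∈ s, ((d i + 1 - t : ℕ) : ℝ) ≤
      (c : ℝ) ^ (1 / (t : ℝ)) * (#s : ℝ) ^ (1 - 1 / (t : ℝ)) * n :=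
    calc ∑ i ∈ s, ((d i + 1 - t : ℕ) : ℝ)
        ≤ (#s : ℝ) ^ (1 - 1 / (t : ℝ)) *
            (∑ i ∈ s, ((d i + 1 - t : ℕ) : ℝ) ^ (t : ℝ)) ^ (1 / (t : ℝ)) :=
          sum_le_card_rpow_mul_sum_rpow (by exact_mod_cast ht) fun _ _ => Nat.cast_nonneg _
      _ ≤ (#s : ℝ) ^ (1 - 1 / (t : ℝ)) * (c * (n : ℝ) ^ (t : ℝ)) ^ (1 / (t : ℝ)) := by gcongr
      _ = (c : ℝ) ^ (1 / (t : ℝ)) * (#s : ℝ) ^ (1 - 1 / (t : ℝ)) * n := by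
          rw [Real.mul_rpow (by positivity) (by positivity), one_div,
            Real.rpow_rpow_inv (by positivity) (by positivity)]
          ring
  have le_excess_add (i : ι) : (d i : ℝ) ≤ ((d i + 1 - t : ℕ) : ℝ) + (t - 1) := by
    rw [← Nat.cast_pred ht]
    exact_mod_cast (by omega : d i ≤ d i + 1 - t + (t - 1))
  calc (∑ i ∈ s, d i : ℝ)
      ≤ ∑ i ∈ s, (((d i + 1 - t : ℕ) : ℝ) + (t - 1)) := sum_le_sum fun i _ => le_excess_add i
    _ = ∑ i ∈ s, ((d i + 1 - t : ℕ) : ℝ) + (t - 1) * #s := by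
        rw [sum_add_distrib, sum_const, nsmul_eq_mul, mul_comm]
    _ ≤ _ := by gcongr

end Convexity

section Extremal

variable {m n r t : ℕ}

theorem matWeight_le_of_not_matContains (hr : 1 ≤ r) (ht : 1 ≤ t) {M : Fin m → Fin n → Bool}
    {A : Fin r → Fin t → Bool} (hM : ¬ matContains M A) :
    (matWeight M : ℝ) ≤
      (r - 1 : ℝ) ^ (1 / (t : ℝ)) * (m : ℝ) ^ (1 - 1 / (t : ℝ)) * n + (t - 1) * m := by
  simpa only [matWeight_eq_sum_card_rowSupport, Nat.cast_sum, Nat.cast_pred hr, card_univ,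
    Fintype.card_fin] using sum_le_of_sum_choose_le ht (sum_choose_card_rowSupport_le hM)

theorem matEx_le_of_forall_matWeight_le {A : Fin r → Fin t → Bool} {B : ℝ} (hB : 0 ≤ B)
    (h : ∀ M : Fin n → Fin n → Bool, ¬ matContains M A → (matWeight M : ℝ) ≤ B) :
    (matEx n A : ℝ) ≤ B := by
  refine (Nat.le_floor_iff hB).1 (csSup_le' ?_)
  rintro _ ⟨M, hM, rfl⟩
  exact Nat.le_floor (h M hM)

theorem matEx_le_rpow_add (hr : 1 ≤ r) (ht : 1 ≤ t) (hn : 0 < n) (A : Fin r → Fin t → Bool) :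
    (matEx n A : ℝ) ≤
      (r - 1 : ℝ) ^ (1 / (t : ℝ)) * (n : ℝ) ^ (2 - 1 / (t : ℝ)) + (t - 1) * n := by
  have hr' : (0 : ℝ) ≤ r - 1 := sub_nonneg.2 (by exact_mod_cast hr)
  have ht' : (0 : ℝ) ≤ t - 1 := sub_nonneg.2 (by exact_mod_cast ht)
  have rpow_eq : (n : ℝ) ^ (2 - 1 / (t : ℝ)) = (n : ℝ) ^ (1 - 1 / (t : ℝ)) * n := by
    rw [← Real.rpow_add_one (by positivity)]
    ring_nf
  refine matEx_le_of_forall_matWeight_le (by positivity) fun M hM => ?_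
  rw [rpow_eq, ← mul_assoc]
  exact matWeight_le_of_not_matContains hr ht hM

end Extremal

end KovariSosTuran

theorem statement7_general (r t : ℕ) (hr : 1 ≤ r) (ht : 1 ≤ t) :
    ∃ C : ℝ, 0 < C ∧ ∀ (A : Fin r → Fin t → Bool) (n : ℕ), 0 < n →
      (matEx n A : ℝ) ≤ C * (n : ℝ) ^ (2 - 1 / (t : ℝ)) := by
  have hr' : (0 : ℝ) ≤ r - 1 := sub_nonneg.2 (by exact_mod_cast hr)
  have ht' : (1 : ℝ) ≤ t := by exact_mod_cast ht
  refine ⟨(r - 1 : ℝ) ^ (1 / (t : ℝ)) + t, by positivity, fun A n hn => ?_⟩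
  have one_le_exponent : 1 ≤ 2 - 1 / (t : ℝ) := by
    linarith [(div_le_one (by positivity)).2 ht']
  have le_rpow : (n : ℝ) ≤ (n : ℝ) ^ (2 - 1 / (t : ℝ)) :=
    Real.self_le_rpow_of_one_le (by exact_mod_cast hn) one_le_exponent
  calc (matEx n A : ℝ)
      ≤ (r - 1 : ℝ) ^ (1 / (t : ℝ)) * (n : ℝ) ^ (2 - 1 / (t : ℝ)) + (t - 1) * n :=
        matEx_le_rpow_add hr ht hn A
    _ ≤ (r - 1 : ℝ) ^ (1 / (t : ℝ)) * (n : ℝ) ^ (2 - 1 / (t : ℝ)) +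
          t * (n : ℝ) ^ (2 - 1 / (t : ℝ)) := by
        gcongr
        exact sub_le_self _ zero_le_one
    _ = ((r - 1 : ℝ) ^ (1 / (t : ℝ)) + t) * (n : ℝ) ^ (2 - 1 / (t : ℝ)) := by ring

/-- For the `r × t` all-one matrix `A_{r,t}` (with `r, t ≥ 1`) we have
`ex(n, A_{r,t}) ≤ C · n^(2 - 1/t)` for some constant `C` and all positive integers `n`. -/
theorem statement7 (r t : ℕ) (hr : 1 ≤ r) (ht : 1 ≤ t) :
    ∃ C : ℝ, 0 < C ∧ ∀ n : ℕ, 0 < n →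
      (matEx n (fun (_ : Fin r) (_ : Fin t) => true) : ℝ) ≤ C * (n : ℝ) ^ (2 - 1 / (t : ℝ)) := by
  obtain ⟨C, hC, h⟩ := statement7_general r t hr ht
  exact ⟨C, hC, h _⟩
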